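/- arXiv:1404.2144 — 5 statements merged into one kernel-verified Lean document; each statement's English description precedes it below -/
import Mathlib

section
/- Let p be a prime, R a commutative ring of characteristic p, φ a Frobenius splitting of R, Φ the standard splitting of R[X,Y] associated to φ, and (a_{ij}) a 2×2 matrix over R. Then for every integer s with 1 ≤ s ≤ p−1 one has Φ((a₁₁·X + a₁₂·Y)^s · (a₂₁·X + a₂₂·Y)^{p−s}) = φ(a₁₁^s · a₂₁^{p−s})·X + φ(a₁₂^s · a₂₂^{p−s})·Y. -/
open MvPolynomial

/-- A Frobenius splitting of a commutative ring `R` of characteristic `p`: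
an additive map `φ : R → R` with `φ 1 = 1` and `φ (a ^ p * b) = a * φ b`. -/
def IsFrobeniusSplitting (p : ℕ) {R : Type*} [CommRing R] (φ : R →+ R) : Prop :=
  φ 1 = 1 ∧ ∀ a b : R, φ (a ^ p * b) = a * φ b

open scoped Classical in
/-- `Φ` is the standard splitting of `R[X₁,…,X_r]` associated to `φ`:
on a monomial `c · X^I` it gives `φ c · X^(I/p)` if all components of `I`
are divisible by `p`, and `0` otherwise. -/
def IsStdSplitting (p : ℕ) {R : Type*} [CommRing R] {r : ℕ} (φ : R →+ R)
    (Φ : MvPolynomial (Fin r) R →+ MvPolynomial (Fin r) R) : Prop :=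
  ∀ (c : R) (I : Fin r →₀ ℕ),
    Φ (monomial I c) =
      if ∀ k, p ∣ I k then
        monomial (I.mapRange (· / p) (Nat.zero_div p)) (φ c)
      else 0


/-- Coefficient-comparison step in Lemma 2.2: in `R[X,Y]` (with `X = X 0`, `Y = X 1`),
for `1 ≤ s ≤ p - 1`,
`Φ((a₁₁X + a₁₂Y)^s (a₂₁X + a₂₂Y)^(p-s)) = φ(a₁₁^s a₂₁^(p-s)) X + φ(a₁₂^s a₂₂^(p-s)) Y`. -/
theorem stmt2 (p : ℕ) (hp : p.Prime) (R : Type*) [CommRing R] [CharP R p]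
    (φ : R →+ R) (hφ : IsFrobeniusSplitting p φ)
    (Φ : MvPolynomial (Fin 2) R →+ MvPolynomial (Fin 2) R)
    (hΦ : IsStdSplitting p φ Φ)
    (a : Matrix (Fin 2) (Fin 2) R) (s : ℕ) (hs1 : 1 ≤ s) (hs2 : s ≤ p - 1) :
    Φ ((C (a 0 0) * X 0 + C (a 0 1) * X 1) ^ s *
        (C (a 1 0) * X 0 + C (a 1 1) * X 1) ^ (p - s)) =
      C (φ (a 0 0 ^ s * a 1 0 ^ (p - s))) * X 0 +
        C (φ (a 0 1 ^ s * a 1 1 ^ (p - s))) * X 1 := by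
  obtain ⟨t, rfl⟩ : ∃ t, p = s + t := ⟨p - s, by omega⟩
  have ht : 1 ≤ t := by have := hp.two_le; omega
  rw [Nat.add_sub_cancel_left]
  rw [add_pow, add_pow, Finset.sum_mul_sum, map_sum]
  simp only [map_sum]
  have key : ∀ i ∈ Finset.range (s + 1), ∀ j ∈ Finset.range (t + 1),
      Φ ((C (a 0 0) * X 0) ^ i * (C (a 0 1) * X 1) ^ (s - i) * ((s.choose i : ℕ) : MvPolynomial (Fin 2) R) *
        ((C (a 1 0) * X 0) ^ j * (C (a 1 1) * X 1) ^ (t - j) * ((t.choose j : ℕ) : MvPolynomial (Fin 2) R))) =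
      (if i = s then (if j = t then C (φ (a 0 0 ^ s * a 1 0 ^ t)) * X 0 else 0) else 0) +
      (if i = 0 then (if j = 0 then C (φ (a 0 1 ^ s * a 1 1 ^ t)) * X 1 else 0) else 0) := by
    intro i hi j hj
    rw [Finset.mem_range] at hi hj
    have e : ((C (a 0 0) * X 0) ^ i * (C (a 0 1) * X 1) ^ (s - i) * ((s.choose i : ℕ) : MvPolynomial (Fin 2) R) *
        ((C (a 1 0) * X 0) ^ j * (C (a 1 1) * X 1) ^ (t - j) * ((t.choose j : ℕ) : MvPolynomial (Fin 2) R))) =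
        monomial (Finsupp.single 0 (i + j) + Finsupp.single 1 (s + t - (i + j)))
          (a 0 0 ^ i * a 0 1 ^ (s - i) * (s.choose i : R) * (a 1 0 ^ j * a 1 1 ^ (t - j) * (t.choose j : R))) := by
      have e1 : s + t - (i + j) = (s - i) + (t - j) := by omega
      rw [e1, ← mul_one (_ * (_ * (t.choose j : R))), ← C_mul_monomial, ← mul_one (1 : R), ← monomial_mul,
        ← X_pow_eq_monomial, ← X_pow_eq_monomial]
      simp only [map_mul, map_pow, map_natCast, mul_pow, pow_add, mul_one]
      ring
    rw [e, hΦ]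
    by_cases h0 : i + j = 0
    · obtain ⟨rfl, rfl⟩ : i = 0 ∧ j = 0 := by omega
      have hs : (0 : ℕ) ≠ s := by omega
      rw [if_pos (by intro k; fin_cases k <;> simp)]
      have : (Finsupp.mapRange (· / (s + t)) (Nat.zero_div _)
          (Finsupp.single (0 : Fin 2) (0 + 0) + Finsupp.single 1 (s + t - (0 + 0)))) = Finsupp.single 1 1 := by
        ext k
        fin_cases k
        · simp
        · simp [Nat.div_self hp.pos]
      rw [this]
      simp [hs, C_mul_X_eq_monomial]
    · by_cases h1 : i + j = s + t
      · obtain ⟨rfl, rfl⟩ : i = s ∧ j = t := by omega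
        have hs : i ≠ 0 := by omega
        rw [if_pos (by intro k; fin_cases k <;> simp)]
        have : (Finsupp.mapRange (· / (i + j)) (Nat.zero_div _)
            (Finsupp.single (0 : Fin 2) (i + j) + Finsupp.single 1 (i + j - (i + j)))) = Finsupp.single 0 1 := by
          ext k
          fin_cases k
          · simp [Nat.div_self hp.pos]
          · simp
        rw [this]
        simp [hs, C_mul_X_eq_monomial]
      · rw [if_neg]
        · split_ifs <;> first | omega | simp
        · intro h
          have h2 : s + t ∣ i + j := by simpa using h 0
          have := Nat.le_of_dvd (by omega) h2
          omega
  rw [Finset.sum_congr rfl fun i hi => Finset.sum_congr rfl fun j hj => key i hi j hj]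
  simp only [Finset.sum_add_distrib]
  congr 1
  · rw [Finset.sum_eq_single s, Finset.sum_eq_single t] <;> simp +contextual
  · rw [Finset.sum_eq_single 0, Finset.sum_eq_single 0] <;> simp +contextual
end

section
/- Let p be a prime, R a commutative ring of characteristic p, φ a Frobenius splitting of R, Φ the standard splitting of R[X,Y] associated to φ, and (a_{ij}) a 2×2 matrix over R. Assume that φ(c · a₁₁^s · a₂₁^{p−s}) = 0 and φ(c · a₁₂^s · a₂₂^{p−s}) = 0 for all c ∈ R and all integers 1 ≤ s ≤ p−1. Then Φ(c · (a₁₁·X + a₁₂·Y)^{q₁} · (a₂₁·X + a₂₂·Y)^{q₂}) = 0 for every c ∈ R and all integers q₁, q₂ with 1 ≤ q₁ ≤ p−1 and q₁ + q₂ = p. -/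
open MvPolynomial

/-- Key vanishing step in Lemma 2.2: under the vanishing hypothesis on `φ`,
`Φ(c (a₁₁X + a₁₂Y)^{q₁} (a₂₁X + a₂₂Y)^{q₂}) = 0` whenever `1 ≤ q₁ ≤ p - 1` and
`q₁ + q₂ = p`. -/
theorem stmt3 (p : ℕ) (hp : p.Prime) (R : Type*) [CommRing R] [CharP R p]
    (φ : R →+ R) (hφ : IsFrobeniusSplitting p φ)
    (Φ : MvPolynomial (Fin 2) R →+ MvPolynomial (Fin 2) R)
    (hΦ : IsStdSplitting p φ Φ)
    (a : Matrix (Fin 2) (Fin 2) R)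
    (hvan : ∀ (c : R) (s : ℕ), 1 ≤ s → s ≤ p - 1 →
      φ (c * (a 0 0 ^ s * a 1 0 ^ (p - s))) = 0 ∧
      φ (c * (a 0 1 ^ s * a 1 1 ^ (p - s))) = 0) :
    ∀ (c : R) (q₁ q₂ : ℕ), 1 ≤ q₁ → q₁ ≤ p - 1 → q₁ + q₂ = p →
      Φ (C c * (C (a 0 0) * X 0 + C (a 0 1) * X 1) ^ q₁ *
          (C (a 1 0) * X 0 + C (a 1 1) * X 1) ^ q₂) = 0 := by
  intro c q₁ q₂ h1 h2 h3
  rw [add_pow, add_pow, mul_assoc, Finset.sum_mul_sum, Finset.mul_sum, map_sum]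
  refine Finset.sum_eq_zero fun i hi => ?_
  rw [Finset.mul_sum, map_sum]
  refine Finset.sum_eq_zero fun j hj => ?_
  rw [Finset.mem_range] at hi hj
  have hp0 := hp.pos
  have key : (C c * ((C (a 0 0) * X 0) ^ i * (C (a 0 1) * X 1) ^ (q₁ - i) * (q₁.choose i : MvPolynomial (Fin 2) R) *
      ((C (a 1 0) * X 0) ^ j * (C (a 1 1) * X 1) ^ (q₂ - j) * (q₂.choose j : MvPolynomial (Fin 2) R)))) =
      monomial (Finsupp.single 0 (i + j) + Finsupp.single 1 (q₁ - i + (q₂ - j)))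
        (c * (a 0 0 ^ i * a 0 1 ^ (q₁ - i) * (q₁.choose i : R) *
          (a 1 0 ^ j * a 1 1 ^ (q₂ - j) * (q₂.choose j : R)))) := by
    have e : (monomial (Finsupp.single (0 : Fin 2) (i + j) + Finsupp.single 1 (q₁ - i + (q₂ - j))) (1 : R))
        = X 0 ^ (i + j) * X 1 ^ (q₁ - i + (q₂ - j)) := by
      rw [X_pow_eq_monomial, X_pow_eq_monomial, monomial_mul, one_mul]
    rw [← mul_one (c * _), ← C_mul_monomial, e]
    simp only [map_mul, map_pow, map_natCast]
    ring
  rw [key, hΦ]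
  split_ifs with h
  · have h0 : p ∣ i + j := by simpa using h 0
    obtain ⟨k, hk⟩ := h0
    have hk1 : k ≤ 1 := by
      by_contra hc
      have : p * 2 ≤ p * k := Nat.mul_le_mul_left p (by omega)
      omega
    have hz : φ (c * (a 0 0 ^ i * a 0 1 ^ (q₁ - i) * (q₁.choose i : R) *
          (a 1 0 ^ j * a 1 1 ^ (q₂ - j) * (q₂.choose j : R)))) = 0 := by
      have hq : q₂ = p - q₁ := by omega
      interval_cases k
      · obtain rfl : i = 0 := by omega
        obtain rfl : j = 0 := by omega
        simpa [hq] using (hvan c q₁ h1 h2).2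
      · obtain rfl : i = q₁ := by omega
        obtain rfl : j = q₂ := by omega
        simpa [hq] using (hvan c i h1 h2).1
    rw [hz, monomial_zero]
  · rfl
end

section
/- Let p be a prime, R a commutative ring of characteristic p, φ a Frobenius splitting of R, Φ the standard splitting of R[X,Y] associated to φ, and M = (a_{ij}) an invertible 2×2 matrix over R. Then σ_M ∘ Φ = Φ ∘ σ_M (equivalently, the Frobenius splittings of R[X,Y] defined by the standard formula with respect to the basis X, Y and with respect to the basis σ_M(X), σ_M(Y) coincide) if and only if φ(c · a₁₁^s · a₂₁^{p−s}) = 0 and φ(c · a₁₂^s · a₂₂^{p−s}) = 0 for all c ∈ R and all integers 1 ≤ s ≤ p−1. -/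
open MvPolynomial

/-- The `R`-algebra endomorphism `σ_M` of `R[X,Y]` attached to a `2×2` matrix
`M = (a i j)`, sending `X ↦ a₁₁X + a₁₂Y` and `Y ↦ a₂₁X + a₂₂Y`. -/
noncomputable def sigmaM {R : Type*} [CommRing R] (a : Matrix (Fin 2) (Fin 2) R) :
    MvPolynomial (Fin 2) R →ₐ[R] MvPolynomial (Fin 2) R :=
  aeval ![C (a 0 0) * X 0 + C (a 0 1) * X 1, C (a 1 0) * X 0 + C (a 1 1) * X 1]


lemma coeff_std (p : ℕ) (hp : p.Prime) {R : Type*} [CommRing R]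
    (φ : R →+ R) (Φ : MvPolynomial (Fin 2) R →+ MvPolynomial (Fin 2) R)
    (hΦ : IsStdSplitting p φ Φ) (n : Fin 2 →₀ ℕ) (f : MvPolynomial (Fin 2) R) :
    coeff n (Φ f) = φ (coeff (p • n) f) := by
  classical
  induction f using MvPolynomial.induction_on' with
  | monomial I c =>
    rw [hΦ c I, coeff_monomial]
    split_ifs with h1 h2 h2
    · rw [coeff_monomial, if_pos]
      rw [h2]; ext k
      simp [hp.pos]
    · rw [coeff_monomial, if_neg, map_zero]
      rintro rfl
      apply h2
      ext k
      simp [Nat.mul_div_cancel' (h1 k)]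
    · exact absurd (fun k => by simp [h2]) h1
    · simp
  | add f g hf hg => rw [map_add, coeff_add, coeff_add, map_add, hf, hg]

lemma std_pow (p : ℕ) (hp : p.Prime) {R : Type*} [CommRing R] [CharP R p]
    (φ : R →+ R) (hφ : IsFrobeniusSplitting p φ)
    (Φ : MvPolynomial (Fin 2) R →+ MvPolynomial (Fin 2) R)
    (hΦ : IsStdSplitting p φ Φ) (f g : MvPolynomial (Fin 2) R) :
    Φ (f ^ p * g) = f * Φ g := by
  classical
  haveI : Fact p.Prime := ⟨hp⟩
  induction f using MvPolynomial.induction_on' with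
  | monomial I c =>
    ext n
    rw [coeff_std p hp φ Φ hΦ, monomial_pow, coeff_monomial_mul', coeff_monomial_mul',
      coeff_std p hp φ Φ hΦ]
    have h : p • I ≤ p • n ↔ I ≤ n := by
      simp only [Finsupp.le_def, Finsupp.smul_apply, smul_eq_mul]
      exact forall_congr' fun k => Nat.mul_le_mul_left_iff hp.pos
    have h2 : p • n - p • I = p • (n - I) := by
      ext k; simp [Nat.mul_sub]
    rw [h2]
    simp only [h]
    split_ifs
    · exact hφ.2 _ _
    · simp
  | add f₁ f₂ hf hg => rw [add_pow_char, add_mul, map_add, hf, hg, add_mul]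

lemma coeff_hom {R : Type*} [CommRing R] (f : MvPolynomial (Fin 2) R) (n : ℕ)
    (hf : f.IsHomogeneous n) (k : Fin 2) :
    coeff (Finsupp.single k n) f = eval (Pi.single k 1) f := by
  classical
  rw [eval_eq', Finset.sum_eq_single (Finsupp.single k n)]
  · rw [Finset.prod_eq_one, mul_one]
    intro i _
    by_cases h : i = k
    · subst h; simp
    · simp [Finsupp.single_apply, Ne.symm h]
  · intro d hd hne
    have hdeg : Finsupp.degree d = n := by
      by_contra h
      exact (mem_support_iff.mp hd) (hf.coeff_eq_zero h)
    have : ∃ i, i ≠ k ∧ d i ≠ 0 := by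
      by_contra! hcon
      apply hne
      have hs : d = Finsupp.single k (d k) := by
        ext i
        by_cases h : i = k
        · subst h; simp
        · simp [Finsupp.single_apply, Ne.symm h, hcon i h]
      rw [hs, Finsupp.degree_single] at hdeg
      rw [hs, hdeg]
    obtain ⟨i, hi, hdi⟩ := this
    rw [Finset.prod_eq_zero (Finset.mem_univ i), mul_zero]
    simp [Pi.single_apply, hi, hdi]
  · intro h
    rw [notMem_support_iff.mp h, zero_mul]

lemma sigma_hom {R : Type*} [CommRing R] (a : Matrix (Fin 2) (Fin 2) R)
    (I : Fin 2 →₀ ℕ) (c : R) : (sigmaM a (monomial I c)).IsHomogeneous (I 0 + I 1) := by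
  have h : ∀ b d : R,
      (C b * X 0 + C d * X 1 : MvPolynomial (Fin 2) R).IsHomogeneous 1 := fun b d =>
    (isHomogeneous_C_mul_X b 0).add (isHomogeneous_C_mul_X d 1)
  have := (isHomogeneous_C (Fin 2) c).mul
    (((h (a 0 0) (a 0 1)).pow (I 0)).mul ((h (a 1 0) (a 1 1)).pow (I 1)))
  simp only [one_mul, zero_add] at this
  convert this using 1
  rw [sigmaM, aeval_monomial, Finsupp.prod_fintype _ _ (by simp)]
  simp [Fin.prod_univ_two]

lemma sigma_eval {R : Type*} [CommRing R] (a : Matrix (Fin 2) (Fin 2) R)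
    (I : Fin 2 →₀ ℕ) (c : R) (k : Fin 2) :
    eval (Pi.single k 1) (sigmaM a (monomial I c)) = c * (a 0 k ^ I 0 * a 1 k ^ I 1) := by
  rw [sigmaM, aeval_monomial, Finsupp.prod_fintype _ _ (by simp)]
  fin_cases k <;> simp [Fin.prod_univ_two]

lemma coeff_sigma {R : Type*} [CommRing R] (a : Matrix (Fin 2) (Fin 2) R)
    (I : Fin 2 →₀ ℕ) (c : R) (k : Fin 2) (p : ℕ) (h : I 0 + I 1 = p) :
    coeff (p • Finsupp.single k 1) (sigmaM a (monomial I c))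
      = c * (a 0 k ^ I 0 * a 1 k ^ I 1) := by
  rw [← sigma_eval, ← coeff_hom _ p (h ▸ sigma_hom a I c)]
  simp

/-- Lemma 2.2 of the paper: for an invertible matrix `M`, the standard splitting
commutes with `σ_M` (equivalently, the splittings attached to the bases `X, Y` and
`σ_M X, σ_M Y` coincide) iff `φ(c a₁₁^s a₂₁^{p-s}) = φ(c a₁₂^s a₂₂^{p-s}) = 0`
for all `c ∈ R` and `1 ≤ s ≤ p - 1`. -/
theorem stmt4 (p : ℕ) (hp : p.Prime) (R : Type*) [CommRing R] [CharP R p]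
    (φ : R →+ R) (hφ : IsFrobeniusSplitting p φ)
    (Φ : MvPolynomial (Fin 2) R →+ MvPolynomial (Fin 2) R)
    (hΦ : IsStdSplitting p φ Φ)
    (a : Matrix (Fin 2) (Fin 2) R) (ha : IsUnit a) :
    (∀ f : MvPolynomial (Fin 2) R, sigmaM a (Φ f) = Φ (sigmaM a f)) ↔
      (∀ (c : R) (s : ℕ), 1 ≤ s → s ≤ p - 1 →
        φ (c * (a 0 0 ^ s * a 1 0 ^ (p - s))) = 0 ∧
        φ (c * (a 0 1 ^ s * a 1 1 ^ (p - s))) = 0) := by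
  classical
  constructor
  · intro H c s h1 h2
    have hp2 := hp.two_le
    have key : ∀ k : Fin 2, φ (c * (a 0 k ^ s * a 1 k ^ (p - s))) = 0 := by
      intro k
      let I : Fin 2 →₀ ℕ := Finsupp.equivFunOnFinite.symm ![s, p - s]
      have I0 : I 0 = s := rfl
      have I1 : I 1 = p - s := rfl
      have h := coeff_sigma a I c k p (by omega)
      rw [I0, I1] at h
      rw [← h, ← coeff_std p hp φ Φ hΦ, ← H, hΦ, if_neg, map_zero, coeff_zero]
      intro hd
      have := Nat.le_of_dvd (by omega) (hd 0)
      omega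
    exact ⟨key 0, key 1⟩
  · intro H f
    induction f using MvPolynomial.induction_on' with
    | add f g hf hg => simp only [map_add, hf, hg]
    | monomial I c =>
      let Q : Fin 2 →₀ ℕ := I.mapRange (· / p) (Nat.zero_div p)
      let J : Fin 2 →₀ ℕ := I.mapRange (· % p) (Nat.zero_mod p)
      have hI : monomial I c = (monomial Q (1 : R)) ^ p * monomial J c := by
        rw [monomial_pow, monomial_mul, one_pow, one_mul]
        have e : I = p • Q + J := by
          ext k
          simp [Q, J, Nat.div_add_mod]
        rw [← e]
      rw [hI, std_pow p hp φ hφ Φ hΦ, map_mul, map_mul, map_pow, std_pow p hp φ hφ Φ hΦ]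
      congr 1
      have J0 : J 0 < p := Nat.mod_lt _ hp.pos
      have J1 : J 1 < p := Nat.mod_lt _ hp.pos
      clear_value J
      by_cases hJ : J = 0
      · subst hJ
        have e : ∀ d : R, sigmaM a (monomial 0 d) = monomial 0 d := fun d => by
          rw [← C_apply, sigmaM, aeval_C]; rfl
        rw [e, hΦ, if_pos (by simp), Finsupp.mapRange_zero, e]
      have hJ' : J 0 + J 1 ≠ 0 := by
        intro h
        apply hJ
        ext k
        fin_cases k
        · change J 0 = 0; omega
        · change J 1 = 0; omega
      rw [hΦ, if_neg, map_zero]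
      · ext n
        rw [coeff_zero, coeff_std p hp φ Φ hΦ]
        by_cases hd : J 0 + J 1 = p * (n 0 + n 1)
        · have hn : n 0 + n 1 = 1 := by
            have : n 0 + n 1 < 2 := by
              by_contra! h
              have := Nat.mul_le_mul_left p h
              omega
            have : n 0 + n 1 ≠ 0 := by
              intro h
              rw [h] at hd
              omega
            omega
          rw [hn, mul_one] at hd
          have hk : ∃ k, n = Finsupp.single k 1 := by
            rcases Nat.eq_zero_or_pos (n 0) with h | h
            · refine ⟨1, ?_⟩
              ext k
              fin_cases k
              · simpa using h
              · simp; omega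
            · refine ⟨0, ?_⟩
              ext k
              fin_cases k
              · simp; omega
              · simp; omega
          obtain ⟨k, rfl⟩ := hk
          rw [coeff_sigma a J c k p hd]
          have e : J 1 = p - J 0 := by omega
          have := H c (J 0) (by omega) (by omega)
          rw [e]
          fin_cases k
          · exact this.1.symm
          · exact this.2.symm
        · rw [(sigma_hom a J c).coeff_eq_zero, map_zero]
          rw [Finsupp.degree_eq_sum, Fin.sum_univ_two]
          simp only [Finsupp.smul_apply, smul_eq_mul, ← mul_add]
          exact Ne.symm hd
      · intro hd
        have h0 := Nat.eq_zero_of_dvd_of_lt (hd 0) J0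
        have h1 := Nat.eq_zero_of_dvd_of_lt (hd 1) J1
        omega
end

section
/- Let p be a prime, R a commutative ring of characteristic p, φ a Frobenius splitting of R, Φ the standard splitting of R[X,Y] associated to φ, and M = (a_{ij}) a 2×2 matrix over R. If σ_M ∘ Φ = Φ ∘ σ_M, then φ(a₁₁^s · a₂₁^{p−s}) = 0 and φ(a₁₂^s · a₂₂^{p−s}) = 0 for all integers 1 ≤ s ≤ p−1. -/
open MvPolynomial

theorem coeff_std_aux {p : ℕ} (hp : p.Prime) {R : Type*} [CommRing R] {φ : R →+ R}
    {Φ : MvPolynomial (Fin 2) R →+ MvPolynomial (Fin 2) R} (hΦ : IsStdSplitting p φ Φ)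
    (J : Fin 2 →₀ ℕ) (g : MvPolynomial (Fin 2) R) :
    coeff J (Φ g) = φ (coeff (p • J) g) := by
  classical
  induction g using MvPolynomial.induction_on' with
  | monomial I c =>
    rw [hΦ c I, coeff_monomial]
    by_cases h : I = p • J
    · have h1 : ∀ k, p ∣ I k := fun k => by simp [h]
      have h2 : I.mapRange (· / p) (Nat.zero_div p) = J := by
        ext k
        simp [h, Nat.mul_div_cancel_left _ hp.pos]
      rw [if_pos h1, if_pos h, coeff_monomial, if_pos h2]
    · rw [if_neg h, map_zero]
      split_ifs with h1
      · rw [coeff_monomial, if_neg]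
        intro h2
        apply h
        ext k
        have h3 := DFunLike.congr_fun h2 k
        simp only [Finsupp.mapRange_apply] at h3
        simp [← h3, Nat.mul_div_cancel' (h1 k)]
      · simp
  | add f g hf hg => rw [map_add, coeff_add, hf, hg, coeff_add, map_add]

theorem coeff_lin_mul_aux {R : Type*} [CommRing R] (i j : Fin 2) (hij : j ≠ i) (a b : R) (n : ℕ)
    (g : MvPolynomial (Fin 2) R) :
    coeff (Finsupp.single i (n + 1)) ((C a * X i + C b * X j) * g)
      = a * coeff (Finsupp.single i n) g := by
  classical
  rw [add_mul, coeff_add, mul_assoc, mul_assoc, coeff_C_mul, coeff_C_mul, coeff_X_mul',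
    coeff_X_mul', if_pos (by simp), if_neg (by simp [Finsupp.single_apply, hij.symm])]
  rw [← Finsupp.single_tsub]
  simp

theorem coeff_lin_pow_mul_aux {R : Type*} [CommRing R] (i j : Fin 2) (hij : j ≠ i) (a b : R)
    (m n : ℕ) (g : MvPolynomial (Fin 2) R) :
    coeff (Finsupp.single i (m + n)) ((C a * X i + C b * X j) ^ m * g)
      = a ^ m * coeff (Finsupp.single i n) g := by
  induction m with
  | zero => simp
  | succ m ih =>
    rw [pow_succ', mul_assoc, show m + 1 + n = m + n + 1 by ring, coeff_lin_mul_aux i j hij, ih]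
    ring

theorem coeff_lin_prod_aux {R : Type*} [CommRing R] (i j : Fin 2) (hij : j ≠ i) (a b c d : R)
    (m n : ℕ) :
    coeff (Finsupp.single i (m + n)) ((C a * X i + C b * X j) ^ m * (C c * X i + C d * X j) ^ n)
      = a ^ m * c ^ n := by
  rw [coeff_lin_pow_mul_aux i j hij]
  have h := coeff_lin_pow_mul_aux i j hij c d n 0 1
  simp only [add_zero, mul_one] at h
  rw [h]
  simp

/-- Necessity direction of Lemma 2.2: if the standard splitting `Φ` commutes with
`σ_M`, then `φ(a₁₁^s a₂₁^{p-s}) = φ(a₁₂^s a₂₂^{p-s}) = 0` for all `1 ≤ s ≤ p - 1`. -/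
theorem stmt5 (p : ℕ) (hp : p.Prime) (R : Type*) [CommRing R] [CharP R p]
    (φ : R →+ R) (hφ : IsFrobeniusSplitting p φ)
    (Φ : MvPolynomial (Fin 2) R →+ MvPolynomial (Fin 2) R)
    (hΦ : IsStdSplitting p φ Φ)
    (a : Matrix (Fin 2) (Fin 2) R)
    (hcomm : ∀ f : MvPolynomial (Fin 2) R, sigmaM a (Φ f) = Φ (sigmaM a f)) :
    ∀ s : ℕ, 1 ≤ s → s ≤ p - 1 →
      φ (a 0 0 ^ s * a 1 0 ^ (p - s)) = 0 ∧ φ (a 0 1 ^ s * a 1 1 ^ (p - s)) = 0 := by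
  intro s hs1 hs2
  have hp0 := hp.pos
  have hsp : s + (p - s) = p := by omega
  have h0 : Φ (X 0 ^ s * X 1 ^ (p - s)) = 0 := by
    have e : (X 0 ^ s * X 1 ^ (p - s) : MvPolynomial (Fin 2) R)
        = monomial (Finsupp.single 0 s + Finsupp.single 1 (p - s)) 1 := by
      rw [X_pow_eq_monomial, X_pow_eq_monomial, monomial_mul, one_mul]
    rw [e, hΦ, if_neg]
    intro h
    have h1 := h 0
    simp at h1
    have := Nat.le_of_dvd hs1 h1
    omega
  have h1 := hcomm (X 0 ^ s * X 1 ^ (p - s))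
  rw [h0, map_zero] at h1
  have key : ∀ i : Fin 2, φ (coeff (Finsupp.single i p)
      (sigmaM a (X 0 ^ s * X 1 ^ (p - s)))) = 0 := by
    intro i
    have h2 := coeff_std_aux hp hΦ (Finsupp.single i 1) (sigmaM a (X 0 ^ s * X 1 ^ (p - s)))
    rw [← h1, coeff_zero] at h2
    rw [h2]
    simp
  have hσ : sigmaM a (X 0 ^ s * X 1 ^ (p - s)) = (C (a 0 0) * X 0 + C (a 0 1) * X 1) ^ s *
      (C (a 1 0) * X 0 + C (a 1 1) * X 1) ^ (p - s) := by
    simp [sigmaM]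
  rw [hσ] at key
  constructor
  · have h2 := coeff_lin_prod_aux 0 1 (by decide) (a 0 0) (a 0 1) (a 1 0) (a 1 1) s (p - s)
    rw [hsp] at h2
    rw [← h2]
    exact key 0
  · have h2 := coeff_lin_prod_aux 1 0 (by decide) (a 0 1) (a 0 0) (a 1 1) (a 1 0) s (p - s)
    rw [hsp, add_comm (C (a 0 1) * X 1), add_comm (C (a 1 1) * X 1)] at h2
    rw [← h2]
    exact key 1
end

section
/- Let p be a prime, k a perfect field of characteristic p, φ : k → k the p-th root map (the unique Frobenius splitting of k), and Φ the standard splitting of k[X,Y] associated to φ. Let σ be the k-algebra automorphism of k[X,Y] with σ(X) = X + Y and σ(Y) = Y. Then Φ(σ(X·Y^{p−1})) = Y while σ(Φ(X·Y^{p−1})) = 0; in particular Φ ∘ σ ≠ σ ∘ Φ, so the standard splitting of the polynomial ring in two variables depends on the choice of basis. -/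
open MvPolynomial

/-- The shear automorphism `σ` of `k[X,Y]` with `σ X = X + Y`, `σ Y = Y`. -/
noncomputable def shear (k : Type*) [CommRing k] :
    MvPolynomial (Fin 2) k →ₐ[k] MvPolynomial (Fin 2) k :=
  aeval ![X 0 + X 1, X 1]

/-- For `k` a perfect field of characteristic `p`, `φ` the `p`-th root map, and `Φ`
the standard splitting of `k[X,Y]` associated to `φ`:
`Φ(σ(X Y^{p-1})) = Y` while `σ(Φ(X Y^{p-1})) = 0`, so `Φ ∘ σ ≠ σ ∘ Φ`;
the standard splitting depends on the choice of basis. -/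
theorem stmt6 (p : ℕ) [Fact p.Prime] (k : Type*) [Field k] [CharP k p] [PerfectRing k p]
    (Φ : MvPolynomial (Fin 2) k →+ MvPolynomial (Fin 2) k)
    (hΦ : IsStdSplitting p ((frobeniusEquiv k p).symm.toRingHom.toAddMonoidHom) Φ) :
    Φ (shear k (X 0 * X 1 ^ (p - 1))) = X 1 ∧
      shear k (Φ (X 0 * X 1 ^ (p - 1))) = 0 ∧
      ⇑Φ ∘ ⇑(shear k) ≠ ⇑(shear k) ∘ ⇑Φ := by
  classical
  have hp : p.Prime := Fact.out
  have h0 : Φ (X 0 * X 1 ^ (p - 1)) = 0 := by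
    have e : (X 0 * X 1 ^ (p - 1) : MvPolynomial (Fin 2) k)
        = monomial (Finsupp.single 0 1 + Finsupp.single 1 (p - 1)) 1 := by
      rw [X_pow_eq_monomial, X, monomial_mul, one_mul]
    rw [e, hΦ, if_neg]
    intro h
    have h1 := h 0
    simp at h1
    exact hp.one_lt.ne' h1
  have h1 : Φ (X 1 ^ p) = X 1 := by
    rw [X_pow_eq_monomial, hΦ, if_pos]
    · have e : (Finsupp.single (1 : Fin 2) p).mapRange (· / p) (Nat.zero_div p)
          = Finsupp.single 1 1 := by
        rw [Finsupp.mapRange_single, Nat.div_self hp.pos]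
      have e1 : (frobeniusEquiv k p).symm.toRingHom.toAddMonoidHom 1 = 1 :=
        map_one (frobeniusEquiv k p).symm
      rw [e, e1]
      rfl
    · intro i
      fin_cases i <;> simp
  have h2 : Φ (shear k (X 0 * X 1 ^ (p - 1))) = X 1 := by
    have e : shear k (X 0 * X 1 ^ (p - 1)) = X 0 * X 1 ^ (p - 1) + X 1 ^ p := by
      simp only [shear, map_mul, map_pow, aeval_X, Matrix.cons_val_zero, Matrix.cons_val_one]
      rw [add_mul, mul_pow_sub_one hp.ne_zero]
    rw [e, map_add, h0, h1, zero_add]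
  have h3 : shear k (Φ (X 0 * X 1 ^ (p - 1))) = 0 := by rw [h0, map_zero]
  refine ⟨h2, h3, fun h => ?_⟩
  have h4 := congrFun h (X 0 * X 1 ^ (p - 1))
  simp only [Function.comp_apply] at h4
  rw [h2, h3] at h4
  exact X_ne_zero 1 h4
end
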